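/- Let β ∈ [0,1) be a left-c.e. real number that is qS-complete among left-c.e. reals, i.e. γ ≤_qS β for every left-c.e. real γ. Then h₁(β) is also qS-complete among left-c.e. reals, i.e. γ ≤_qS h₁(β) for every left-c.e. real γ. -/

import Mathlib

open Filter Topology

/-- `a` is a computable nondecreasing sequence of rationals converging to the real `x`. -/
def CompApproxSeq (x : ℝ) (a : ℕ → ℚ) : Prop :=
  Computable a ∧ Monotone a ∧ Filter.Tendsto (fun n => (a n : ℝ)) Filter.atTop (nhds x)

/-- A real number is left-c.e. if it has a computable nondecreasing sequence of
rationals converging to it (equivalently, its left cut is c.e.). -/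
def LeftCE (x : ℝ) : Prop := ∃ a : ℕ → ℚ, CompApproxSeq x a

/-- Solovay reducibility: there are a partial computable `f : ℚ →. ℚ` and a positive
integer `d` such that for every rational `q < β`, `f q` is defined, `f q < α`, and
`α - f q < d * (β - q)`. -/
def SRed (α β : ℝ) : Prop :=
  ∃ f : ℚ →. ℚ, Partrec f ∧ ∃ d : ℕ, 0 < d ∧
    ∀ q : ℚ, (q : ℝ) < β → ∃ y ∈ f q, (y : ℝ) < α ∧ α - (y : ℝ) < (d : ℝ) * (β - (q : ℝ))

/-- Quasi Solovay reducibility: there are a partial computable `f : ℚ →. ℚ` and positive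
integers `d, l` such that for every rational `q < β`, `f q` is defined, `f q < α`, and
`(α - f q) ^ l < d * (β - q)`. -/
def QSRed (α β : ℝ) : Prop :=
  ∃ f : ℚ →. ℚ, Partrec f ∧ ∃ d l : ℕ, 0 < d ∧ 0 < l ∧
    ∀ q : ℚ, (q : ℝ) < β → ∃ y ∈ f q, (y : ℝ) < α ∧
      (α - (y : ℝ)) ^ l < (d : ℝ) * (β - (q : ℝ))

/-- The `n`-th binary digit (after the binary point, counting from `n = 0`) of the
canonical binary expansion of a real in `[0,1)` (the expansion with infinitely many 0s). -/
noncomputable def binDigit (x : ℝ) (n : ℕ) : ℕ := (⌊x * 2 ^ (n + 1)⌋).toNat % 2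

/-- `h₁ x` is the real whose binary expansion lists each bit of `x` followed by its
complement: if `x = Σ aₙ 2^{-(n+1)}` then
`h₁ x = Σ (aₙ 2^{-(2n+1)} + (1 - aₙ) 2^{-(2n+2)})`. -/
noncomputable def h₁ (x : ℝ) : ℝ :=
  ∑' n : ℕ, ((binDigit x n : ℝ) / 2 ^ (2 * n + 1) + (1 - (binDigit x n : ℝ)) / 2 ^ (2 * n + 2))

open Encodable

/-- the underlying (non-surjective) code of a rational -/
noncomputable def EQ (q : ℚ) : ℕ := @encode ℚ Rat.instEncodable q

instance SInf : Infinite (Set.range EQ) :=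
    Infinite.of_injective _ (Equiv.ofInjective _ (@encode_injective ℚ Rat.instEncodable)).injective

theorem EQ_ofNat : ∃ (_ : DecidablePred (· ∈ Set.range EQ)),
    ∀ n, EQ (Denumerable.ofNat ℚ n) = (Nat.Subtype.ofNat (Set.range EQ) n : ℕ) := by
  refine ⟨@decidableRangeEncode ℚ Rat.instEncodable, fun n => ?_⟩
  let := @decidableRangeEncode ℚ Rat.instEncodable
  let : Infinite (Set.range (@encode ℚ Rat.instEncodable)) :=
    Infinite.of_injective _ (Equiv.ofInjective _ encode_injective).injective
  let := Nat.Subtype.denumerable (Set.range (@encode ℚ Rat.instEncodable))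
  have := Denumerable.ofEquiv_ofNat (Set.range (@encode ℚ Rat.instEncodable))
    (@equivRangeEncode ℚ Rat.instEncodable) n
  change EQ (@Denumerable.ofNat ℚ (Denumerable.ofEncodableOfInfinite ℚ) n) = _
  have h2 : @Denumerable.ofNat ℚ (Denumerable.ofEncodableOfInfinite ℚ) n =
    @Denumerable.ofNat ℚ (Denumerable.ofEquiv (Set.range (@encode ℚ Rat.instEncodable))
      (@equivRangeEncode ℚ Rat.instEncodable)) n := rfl
  rw [h2, this]
  have h3 : ∀ x, EQ ((@equivRangeEncode ℚ Rat.instEncodable).symm x) = (x:ℕ) := by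
    intro x
    have := congrArg Subtype.val ((@equivRangeEncode ℚ Rat.instEncodable).apply_symm_apply x)
    exact this
  rw [h3]
  rfl

theorem EQ_eq (q : ℚ) : EQ q = Nat.pair (encode q.num) q.den := rfl

theorem enc_nat (k : ℕ) : encode (k : ℤ) = 2*k := rfl
theorem enc_neg (k : ℕ) : encode (Int.negSucc k : ℤ) = 2*k+1 := rfl

theorem enc_natAbs (z : ℤ) : (encode z + 1) / 2 = z.natAbs := by
  cases z with
  | ofNat k => have := enc_nat k; simp only [Int.ofNat_eq_natCast, this]; simp; omega
  | negSucc k => rw [enc_neg]; simp; omega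

theorem enc_toNat (z : ℤ) : (if encode z % 2 = 0 then encode z / 2 else 0) = z.toNat := by
  cases z with
  | ofNat k => have := enc_nat k; simp only [Int.ofNat_eq_natCast, this]; simp
  | negSucc k => rw [enc_neg]; simp

theorem enc_negToNat (z : ℤ) : (if encode z % 2 = 0 then 0 else (encode z + 1) / 2) = (-z).toNat := by
  cases z with
  | ofNat k => have := enc_nat k; simp only [Int.ofNat_eq_natCast, this]; simp
  | negSucc k => rw [enc_neg]; simp; omega

theorem coprime_iff (a b : ℕ) (hb : 0 < b) (x : ℕ) (hx : b ≤ x) :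
    a.Coprime b ↔ ∀ d < x + 1, ¬ (a % d = 0 ∧ b % d = 0 ∧ d ≠ 1) := by
  constructor
  · rintro h d _ ⟨h1, h2, h3⟩
    exact h3 (Nat.eq_one_of_dvd_coprimes h (Nat.dvd_of_mod_eq_zero h1) (Nat.dvd_of_mod_eq_zero h2))
  · intro h
    by_contra hc
    refine h (a.gcd b) ?_ ⟨Nat.mod_eq_zero_of_dvd (Nat.gcd_dvd_left _ _),
      Nat.mod_eq_zero_of_dvd (Nat.gcd_dvd_right _ _), hc⟩
    have := Nat.gcd_le_right a hb
    omega

theorem mem_range_EQ (x : ℕ) : x ∈ Set.range EQ ↔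
    (0 < x.unpair.2 ∧ ∀ d < x + 1, ¬ (((x.unpair.1 + 1) / 2) % d = 0 ∧ x.unpair.2 % d = 0 ∧ d ≠ 1)) := by
  constructor
  · rintro ⟨q, rfl⟩
    have h := Nat.unpair_right_le (EQ q)
    rw [← and_congr_right fun hb => coprime_iff _ _ hb _ h]
    rw [EQ_eq, Nat.unpair_pair]
    simp only [enc_natAbs]
    exact ⟨q.pos, q.reduced⟩
  · intro hx
    rw [← and_congr_right fun hb => coprime_iff _ _ hb _ (Nat.unpair_right_le x)] at hx
    obtain ⟨z, hz⟩ : ∃ z : ℤ, encode z = x.unpair.1 :=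
      ⟨Denumerable.ofNat ℤ x.unpair.1, Denumerable.encode_ofNat _⟩
    rw [← hz, enc_natAbs] at hx
    refine ⟨⟨z, x.unpair.2, hx.1.ne', hx.2⟩, ?_⟩
    rw [EQ_eq]
    simp only [hz, Nat.pair_unpair]

theorem prim_mem : PrimrecPred (fun x => x ∈ Set.range EQ) := by
  have h1 : PrimrecRel (fun d x : ℕ =>
      ¬ (((x.unpair.1 + 1) / 2) % d = 0 ∧ x.unpair.2 % d = 0 ∧ d ≠ 1)) := by
    have hu : Primrec (fun p : ℕ × ℕ => p.2.unpair) := Primrec.unpair.comp Primrec.snd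
    have hu1 := Primrec.fst.comp hu
    have hu2 := Primrec.snd.comp hu
    have ha : PrimrecPred (fun p : ℕ × ℕ => ((p.2.unpair.1 + 1) / 2) % p.1 = 0) :=
      Primrec.eq.comp (Primrec.nat_mod.comp
        (Primrec.nat_div.comp (Primrec.succ.comp hu1) (Primrec.const 2)) Primrec.fst) (Primrec.const 0)
    have hb : PrimrecPred (fun p : ℕ × ℕ => p.2.unpair.2 % p.1 = 0) :=
      Primrec.eq.comp (Primrec.nat_mod.comp hu2 Primrec.fst) (Primrec.const 0)
    have hc : PrimrecPred (fun p : ℕ × ℕ => p.1 ≠ 1) :=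
      (Primrec.eq.comp Primrec.fst (Primrec.const 1)).not
    exact (ha.and (hb.and hc)).not
  have h2 := h1.forall_lt.comp (Primrec.succ) (Primrec.id (α := ℕ))
  have h3 : PrimrecPred (fun x : ℕ => 0 < x.unpair.2) :=
    Primrec.nat_lt.comp (Primrec.const 0) (Primrec.snd.comp Primrec.unpair)
  exact (h3.and h2).of_eq fun x => (mem_range_EQ x).symm

theorem EQ_seq_comp : Computable (fun n => EQ (Denumerable.ofNat ℚ n)) := by
  obtain ⟨hd, h⟩ := EQ_ofNat
  classical
  have hex : ∀ x : ℕ, ∃ m, x + m + 1 ∈ Set.range EQ := by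
    intro x
    obtain ⟨y, hy, hxy⟩ := (Set.infinite_coe_iff.1 SInf).exists_gt x
    exact ⟨y - x - 1, by rwa [show x + (y - x - 1) + 1 = y by omega]⟩
  have hP : ComputablePred (fun p : ℕ × ℕ => p.1 + p.2 + 1 ∈ Set.range EQ) :=
    (prim_mem.comp (Primrec.succ.comp (Primrec.nat_add.comp Primrec.fst Primrec.snd))).computablePred
  have hf := Computable.find (P := fun x m => x + m + 1 ∈ Set.range EQ) hP hex
  have hs : Computable (fun x => x + Nat.find (hex x) + 1) :=
    Computable.succ.comp (Primrec.nat_add.to_comp.comp Computable.id hf)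
  have hr : Computable (fun n : ℕ => (Nat.rec (EQ (Denumerable.ofNat ℚ 0))
      (fun _ y => y + Nat.find (hex y) + 1) n : ℕ)) :=
    Computable.nat_rec (h := fun _ p => p.2 + Nat.find (hex p.2) + 1) Computable.id
      (Computable.const _) (hs.comp (Computable.snd.comp Computable.snd))
  refine hr.of_eq fun n => ?_
  induction n with
  | zero => rfl
  | succ n ih =>
    simp only [ih]
    simp only [h]
    rw [Nat.Subtype.ofNat]
    simp only [Nat.Subtype.succ]

theorem EQ_comp : Computable EQ := by
  have := EQ_seq_comp.comp (Computable.encode (α := ℚ))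
  exact this.of_eq fun q => by rw [Denumerable.ofNat_encode]

theorem prim_pow : Primrec₂ (fun a b : ℕ => a ^ b) := Primrec₂.unpaired'.1 Nat.Primrec.pow

theorem den_comp : Computable (fun q : ℚ => q.den) := by
  refine ((Primrec.snd.comp Primrec.unpair).to_comp.comp EQ_comp).of_eq fun q => ?_
  rw [EQ_eq, Nat.unpair_pair]

theorem encnum_comp : Computable (fun q : ℚ => encode q.num) := by
  refine ((Primrec.fst.comp Primrec.unpair).to_comp.comp EQ_comp).of_eq fun q => ?_
  rw [EQ_eq, Nat.unpair_pair]

theorem pnum_comp : Computable (fun q : ℚ => q.num.toNat) := by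
  have : Primrec (fun x : ℕ => if x % 2 = 0 then x / 2 else 0) :=
    Primrec.ite (Primrec.eq.comp (Primrec.nat_mod.comp Primrec.id (Primrec.const 2)) (Primrec.const 0))
      (Primrec.nat_div.comp Primrec.id (Primrec.const 2)) (Primrec.const 0)
  exact (this.to_comp.comp encnum_comp).of_eq fun q => enc_toNat _

theorem nnum_comp : Computable (fun q : ℚ => (-q.num).toNat) := by
  have : Primrec (fun x : ℕ => if x % 2 = 0 then 0 else (x + 1) / 2) :=
    Primrec.ite (Primrec.eq.comp (Primrec.nat_mod.comp Primrec.id (Primrec.const 2)) (Primrec.const 0))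
      (Primrec.const 0) (Primrec.nat_div.comp Primrec.succ (Primrec.const 2))
  exact (this.to_comp.comp encnum_comp).of_eq fun q => enc_negToNat _

/-- assembling a rational from naturals -/
theorem mk_comp {a b d : ℕ → ℕ} (ha : Computable a) (hb : Computable b) (hd : Computable d)
    (hpos : ∀ n, 0 < d n) :
    Computable (fun n => ((a n : ℚ) - b n) / d n) := by
  classical
  let P : ℕ → ℕ → Prop := fun n k =>
    (Denumerable.ofNat ℚ k).num.toNat * d n + b n * (Denumerable.ofNat ℚ k).den =
      a n * (Denumerable.ofNat ℚ k).den + (-(Denumerable.ofNat ℚ k).num).toNat * d n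
  have key : ∀ n k, P n k ↔ Denumerable.ofNat ℚ k = ((a n : ℚ) - b n) / d n := by
    intro n k
    generalize hq : Denumerable.ofNat ℚ k = q
    have h1 : (q.num.toNat : ℤ) - ((-q.num).toNat : ℤ) = q.num := by omega
    have h2 : (d n : ℚ) ≠ 0 := by exact_mod_cast (hpos n).ne'
    have h3 : (q.den : ℚ) ≠ 0 := by exact_mod_cast q.den_nz
    have h4 : (q.num : ℚ) = q * q.den := (Rat.mul_den_eq_num q).symm
    have h1' : (q.num.toNat : ℚ) - ((-q.num).toNat : ℚ) = q.num := by exact_mod_cast h1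
    simp only [P, hq]
    rw [eq_div_iff h2, ← Nat.cast_inj (R := ℚ)]
    push_cast
    constructor
    · intro h
      apply mul_right_cancel₀ h3
      linear_combination h + (d n : ℚ) * (- h1' - h4)
    · intro h
      linear_combination (q.den : ℚ) * h - (d n : ℚ) * (- h1' - h4)
  have hex : ∀ n, ∃ k, P n k := fun n =>
    ⟨@encode ℚ Rat.instDenumerable.toEncodable (((a n : ℚ) - b n) / d n), (key _ _).2 (Denumerable.ofNat_encode _)⟩
  have hq : Computable (fun p : ℕ × ℕ => Denumerable.ofNat ℚ p.2) :=
    (Primrec.ofNat ℚ).to_comp.comp Computable.snd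
  have hP : ComputablePred (fun p : ℕ × ℕ => P p.1 p.2) := by
    refine ⟨inferInstance, ?_⟩
    have hmul := Primrec.nat_mul.to_comp
    have hadd := Primrec.nat_add.to_comp
    have hn1 := pnum_comp.comp hq
    have hn2 := nnum_comp.comp hq
    have hn3 := den_comp.comp hq
    have hd' : Computable (fun p : ℕ × ℕ => d p.1) := hd.comp Computable.fst
    have ha' : Computable (fun p : ℕ × ℕ => a p.1) := ha.comp Computable.fst
    have hb' : Computable (fun p : ℕ × ℕ => b p.1) := hb.comp Computable.fst
    have e1 := hadd.comp (hmul.comp hn1 hd') (hmul.comp hb' hn3)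
    have e2 := hadd.comp (hmul.comp ha' hn3) (hmul.comp hn2 hd')
    have e3 : Computable₂ (fun x y : ℕ => decide (x = y)) := Primrec.eq.decide.to_comp
    exact (e3.comp e1 e2).of_eq fun p => by congr
  have hf := Computable.find hP hex
  refine ((Primrec.ofNat ℚ).to_comp.comp hf).of_eq fun n => ?_
  exact (key _ _).1 (Nat.find_spec (hex n))

theorem lt_frac_iff (q : ℚ) (n d : ℕ) (hn : 0 < n) (hd : 0 < d) :
    q.num.toNat * d < n * q.den ↔ (q : ℝ) < (n : ℝ) / d := by
  have hd' : (0 : ℝ) < d := by exact_mod_cast hd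
  have hden : (0 : ℝ) < q.den := by exact_mod_cast q.pos
  have hq : (q : ℝ) = (q.num : ℝ) / q.den := by exact_mod_cast (Rat.num_div_den q).symm
  rw [hq, div_lt_div_iff₀ hden hd']
  rcases le_total 0 q.num with h | h
  · have : (q.num : ℝ) = ((q.num.toNat : ℕ) : ℝ) := by
      exact_mod_cast (Int.toNat_of_nonneg h).symm
    rw [this]
    exact_mod_cast Iff.rfl
  · have h1 : q.num.toNat = 0 := Int.toNat_of_nonpos h
    have h2 : (q.num : ℝ) * d ≤ 0 := mul_nonpos_of_nonpos_of_nonneg (by exact_mod_cast h) hd'.le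
    have h3 : (0 : ℝ) < n * q.den := by positivity
    have h4 : 0 < n * q.den := Nat.mul_pos hn q.pos
    simp only [h1, zero_mul, h4, true_iff]
    linarith

theorem QSRed.reduce {α β γ : ℝ} (hγ : QSRed γ β) {p : ℕ → ℚ} (hp : Computable p) {cn cd : ℕ → ℕ}
    (hcn : Computable cn) (hcd : Computable cd) (hn : ∀ s, 0 < cn s) (hd : ∀ s, 0 < cd s)
    (hlt : ∀ s, (p s : ℝ) < β) (C : ℕ) (hC : 0 < C)
    (hsq : ∀ s, (β - p s) ^ 2 ≤ C * (α - (cn s : ℝ) / cd s))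
    (hconv : ∀ q : ℚ, (q : ℝ) < α → ∃ s, (q : ℝ) < (cn s : ℝ) / cd s) : QSRed γ α := by
  obtain ⟨f, hf, d, l, hd0, hl0, h⟩ := hγ
  have hdec : Computable₂ (fun (q : ℚ) (s : ℕ) => decide (q.num.toNat * cd s < cn s * q.den)) := by
    have e3 : Computable₂ (fun x y : ℕ => decide (x < y)) := Primrec.nat_lt.decide.to_comp
    have hmul := Primrec.nat_mul.to_comp
    have hd' : Computable (fun p : ℚ × ℕ => cd p.2) := hcd.comp Computable.snd
    have ha' : Computable (fun p : ℚ × ℕ => cn p.2) := hcn.comp Computable.snd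
    have hn1 : Computable (fun p : ℚ × ℕ => p.1.num.toNat) := pnum_comp.comp Computable.fst
    have hn3 : Computable (fun p : ℚ × ℕ => p.1.den) := den_comp.comp Computable.fst
    exact e3.comp (hmul.comp hn1 hd') (hmul.comp ha' hn3)
  have hr := Partrec.rfind hdec.partrec₂
  have hg : Partrec₂ (fun (_ : ℚ) (s : ℕ) => f (p s)) := hf.comp (hp.comp Computable.snd)
  refine ⟨_, hr.bind hg, d ^ 2 * C, l * 2, by positivity, by positivity, fun q hq => ?_⟩
  obtain ⟨s0, hs0⟩ := hconv q hq
  obtain ⟨s, hs, -⟩ := Nat.rfind_min' (p := fun s => decide (q.num.toNat * cd s < cn s * q.den))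
    (m := s0) (by simpa using (lt_frac_iff q _ _ (hn s0) (hd s0)).2 hs0)
  have hs1 : (q : ℝ) < (cn s : ℝ) / cd s := by
    have := Nat.rfind_spec hs
    rw [← lt_frac_iff q _ _ (hn s) (hd s)]
    simpa using this
  obtain ⟨y, hy, hy1, hy2⟩ := h (p s) (hlt s)
  refine ⟨y, Part.mem_bind_iff.2 ⟨s, hs, hy⟩, hy1, ?_⟩
  have hdpos : (0 : ℝ) < d := by exact_mod_cast hd0
  have hCpos : (0 : ℝ) < C := by exact_mod_cast hC
  have hpos : 0 ≤ (γ - y) ^ l := pow_nonneg (by linarith) _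
  calc (γ - y) ^ (l * 2) = ((γ - y) ^ l) ^ 2 := pow_mul _ _ _
    _ < ((d : ℝ) * (β - p s)) ^ 2 := by gcongr
    _ = d ^ 2 * (β - p s) ^ 2 := by ring
    _ ≤ d ^ 2 * (C * (α - (cn s : ℝ) / cd s)) := by gcongr; exact hsq s
    _ ≤ d ^ 2 * (C * (α - q)) := by gcongr
    _ = ((d ^ 2 * C : ℕ) : ℝ) * (α - q) := by push_cast; ring

/-- spread the binary digits of `m` to base four -/
def spr (n m : ℕ) : ℕ := ∑ i ∈ Finset.range n, m / 2 ^ i % 2 * 4 ^ i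

theorem spr_prim : Primrec₂ spr := by
  have h : Primrec₂ (fun (m n : ℕ) => (Nat.rec 0 (fun i y => y + m / 2 ^ i % 2 * 4 ^ i) n : ℕ)) := by
    refine Primrec.nat_rec (f := fun _ : ℕ => (0:ℕ)) (g := fun m p => p.2 + m / 2 ^ p.1 % 2 * 4 ^ p.1)
      (Primrec.const 0) ?_
    have hi : Primrec (fun p : ℕ × (ℕ × ℕ) => p.2.1) := Primrec.fst.comp Primrec.snd
    have hy : Primrec (fun p : ℕ × (ℕ × ℕ) => p.2.2) := Primrec.snd.comp Primrec.snd
    have hm : Primrec (fun p : ℕ × (ℕ × ℕ) => p.1) := Primrec.fst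
    exact Primrec.nat_add.comp hy (Primrec.nat_mul.comp (Primrec.nat_mod.comp (Primrec.nat_div.comp hm
      (prim_pow.comp (Primrec.const 2) hi)) (Primrec.const 2)) (prim_pow.comp (Primrec.const 4) hi))
  refine h.swap.of_eq fun n m => ?_
  simp only [Function.swap]
  induction n with
  | zero => rfl
  | succ n ih => simp only [ih, spr, Finset.sum_range_succ]

theorem spr_succ (n m : ℕ) : spr (n + 1) m = 4 * spr n (m / 2) + m % 2 := by
  simp only [spr]
  rw [Finset.sum_range_succ', Finset.mul_sum]
  congr 1
  · refine Finset.sum_congr rfl fun i _ => ?_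
    rw [Nat.div_div_eq_div_mul, pow_succ' 2, pow_succ]; ring
  · simp

theorem spr_ineq (n : ℕ) : ∀ m m' : ℕ, m ≤ m' → m' < 2 ^ n →
    ((m' : ℤ) - m) ^ 2 + 2 * ((m' : ℤ) - m) ≤ 3 * ((spr n m' : ℤ) - spr n m) := by
  induction n with
  | zero => intro m m' h h'; simp at h'; subst h'; simp at h; subst h; simp
  | succ n ih =>
    intro m m' h h'
    have := ih (m / 2) (m' / 2) (by omega) (by rw [pow_succ] at h'; omega)
    rw [spr_succ, spr_succ]
    have e1 : (m : ℤ) = 2 * (m / 2 : ℕ) + (m % 2 : ℕ) := by omega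
    have e2 : (m' : ℤ) = 2 * (m' / 2 : ℕ) + (m' % 2 : ℕ) := by omega
    have c1 : m % 2 < 2 := Nat.mod_lt _ (by norm_num)
    have c2 : m' % 2 < 2 := Nat.mod_lt _ (by norm_num)
    have hle : (m : ℤ) ≤ m' := by exact_mod_cast h
    generalize m / 2 = u at *
    generalize m' / 2 = v at *
    generalize m % 2 = a at *
    generalize m' % 2 = b at *
    rw [e1, e2] at hle ⊢
    push_cast
    interval_cases a <;> interval_cases b <;> push_cast at * <;> nlinarith

theorem spr_shift (n m j : ℕ) : spr (n + j) (m * 2 ^ j) = 4 ^ j * spr n m := by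
  induction j with
  | zero => simp
  | succ j ih =>
    rw [← add_assoc, spr_succ, pow_succ 2, ← mul_assoc]
    simp only [Nat.mul_div_cancel _ (show 0 < 2 by norm_num), Nat.mul_mod_left, ih]
    ring

/-- integer part of `β 2^n` -/
noncomputable def BB (β : ℝ) (n : ℕ) : ℕ := ⌊β * 2 ^ n⌋₊

noncomputable def KK (β : ℝ) : ℝ := ∑' n : ℕ, (binDigit β n : ℝ) / 4 ^ (n + 1)

theorem binDigit_eq (β : ℝ) (n : ℕ) : binDigit β n = BB β (n + 1) % 2 := by
  simp only [binDigit, BB, Int.floor_toNat]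

theorem BB_div (β : ℝ) (n : ℕ) : BB β (n + 1) / 2 = BB β n := by
  simp only [BB]
  have := Nat.floor_div_natCast (β * 2 ^ (n + 1)) 2
  rw [← this]
  congr 1
  push_cast
  rw [pow_succ]; field_simp

theorem BB_le {β : ℝ} (h0 : 0 ≤ β) (n : ℕ) : (BB β n : ℝ) / 2 ^ n ≤ β := by
  rw [div_le_iff₀ (by positivity)]
  exact Nat.floor_le (by positivity)

theorem BB_lt {β : ℝ} (h0 : 0 ≤ β) (h1 : β < 1) (n : ℕ) : BB β n < 2 ^ n := by
  have h := Nat.floor_le (show 0 ≤ β * 2 ^ n by positivity)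
  have h2 : β * 2 ^ n < 2 ^ n := by
    have : (0:ℝ) < 2 ^ n := by positivity
    nlinarith
  have : ((BB β n : ℕ) : ℝ) < ((2 ^ n : ℕ) : ℝ) := by push_cast; exact lt_of_le_of_lt h h2
  exact_mod_cast this

theorem digit_summable (β : ℝ) : Summable (fun n : ℕ => (binDigit β n : ℝ) / 4 ^ (n + 1)) := by
  have hg : Summable (fun n : ℕ => ((1:ℝ) / 4) ^ n) :=
    summable_geometric_of_lt_one (by norm_num) (by norm_num)
  refine Summable.of_nonneg_of_le (fun n => by positivity) (fun n => ?_) hg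
  have h : (binDigit β n : ℝ) ≤ 1 := by
    have : binDigit β n ≤ 1 := by rw [binDigit_eq]; omega
    exact_mod_cast this
  rw [div_pow, one_pow, pow_succ]
  have : (0:ℝ) < 4 ^ n := by positivity
  rw [div_le_div_iff₀ (by positivity) this]
  nlinarith

theorem h₁_eq (β : ℝ) : h₁ β = 1 / 3 + KK β := by
  have hg : HasSum (fun n : ℕ => (1:ℝ) / 4 ^ (n + 1)) (1 / 3) := by
    have := (hasSum_geometric_of_lt_one (r := (1:ℝ)/4) (by norm_num) (by norm_num)).mul_left (1/4)
    have e : (1:ℝ) / 4 * (1 - 1 / 4)⁻¹ = 1 / 3 := by norm_num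
    rw [e] at this
    have e2 : (fun n : ℕ => (1:ℝ) / 4 ^ (n + 1)) = fun i => 1 / 4 * (1 / 4) ^ i := by
      funext n; rw [div_pow, one_pow, pow_succ]; field_simp
    rw [e2]; exact this
  have hk : HasSum _ (KK β) := (digit_summable β).hasSum
  rw [h₁, ← (hg.add hk).tsum_eq]
  refine tsum_congr fun n => ?_
  have e1 : (2:ℝ) ^ (2 * n + 1) = 2 * 4 ^ n := by rw [pow_succ, pow_mul]; norm_num; ring
  have e2 : (2:ℝ) ^ (2 * n + 2) = 4 * 4 ^ n := by rw [pow_add, pow_mul]; norm_num; ring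
  rw [e1, e2, pow_succ]
  field_simp
  ring

theorem partial_eq (β : ℝ) (n : ℕ) :
    ∑ i ∈ Finset.range n, (binDigit β i : ℝ) / 4 ^ (i + 1) = (spr n (BB β n) : ℝ) / 4 ^ n := by
  induction n with
  | zero => simp [spr]
  | succ n ih =>
    rw [Finset.sum_range_succ, ih, spr_succ, BB_div, binDigit_eq]
    push_cast
    rw [pow_succ]; field_simp

theorem T_tendsto (β : ℝ) :
    Tendsto (fun n => (spr n (BB β n) : ℝ) / 4 ^ n) atTop (𝓝 (KK β)) := by
  have := (digit_summable β).hasSum.tendsto_sum_nat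
  simpa only [partial_eq, KK] using this

theorem BB_tendsto (β : ℝ) (h0 : 0 ≤ β) :
    Tendsto (fun n => (BB β n : ℝ) / 2 ^ n) atTop (𝓝 β) := by
  have h : Tendsto (fun n : ℕ => β - (1 / 2 : ℝ) ^ n) atTop (𝓝 (β - 0)) :=
    tendsto_const_nhds.sub (tendsto_pow_atTop_nhds_zero_of_lt_one (by norm_num) (by norm_num))
  rw [sub_zero] at h
  refine tendsto_of_tendsto_of_tendsto_of_le_of_le h tendsto_const_nhds (fun n => ?_)
    (fun n => BB_le h0 n)
  have := Nat.lt_floor_add_one (β * 2 ^ n)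
  have hp : (0:ℝ) < 2 ^ n := by positivity
  simp only [BB]
  rw [le_div_iff₀ hp, sub_mul, div_pow, one_pow, one_div, inv_mul_cancel₀ hp.ne']
  linarith

theorem main_ineq {β : ℝ} (h0 : 0 ≤ β) (h1 : β < 1) (s m : ℕ) (hm : (m : ℝ) ≤ β * 2 ^ s) :
    (β - (m : ℝ) / 2 ^ s) ^ 2 ≤ 3 * (KK β - (spr s m : ℝ) / 4 ^ s) := by
  have l1 := (((tendsto_add_atTop_iff_nat s).2 (BB_tendsto β h0)).sub_const ((m : ℝ) / 2 ^ s)).pow 2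
  have l2 := (((tendsto_add_atTop_iff_nat s).2 (T_tendsto β)).sub_const
    ((spr s m : ℝ) / 4 ^ s)).const_mul 3
  refine le_of_tendsto_of_tendsto' l1 l2 fun j => ?_
  have hle : m * 2 ^ j ≤ BB β (s + j) := by
    refine Nat.le_floor ?_
    push_cast
    rw [pow_add, ← mul_assoc]
    gcongr
  have key := spr_ineq (s + j) _ _ hle (BB_lt h0 h1 _)
  rw [spr_shift, add_comm s j] at key
  have hle' : ((m * 2 ^ j : ℕ) : ℤ) ≤ BB β (j + s) := by rw [add_comm j s]; exact_mod_cast hle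
  have key2 : ((BB β (j + s) : ℤ) - (m * 2 ^ j : ℕ)) ^ 2 ≤
      3 * ((spr (j + s) (BB β (j + s)) : ℤ) - (4 ^ j * spr s m : ℕ)) := by linarith
  have key3 : ((BB β (j + s) : ℝ) - (m * 2 ^ j)) ^ 2 ≤
      3 * ((spr (j + s) (BB β (j + s)) : ℝ) - (4 ^ j * spr s m)) := by exact_mod_cast key2
  have e1 : (BB β (j + s) : ℝ) / 2 ^ (j + s) - m / 2 ^ s =
      ((BB β (j + s) : ℝ) - (m * 2 ^ j)) / 2 ^ (j + s) := by rw [pow_add]; field_simp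
  have e2 : 3 * ((spr (j + s) (BB β (j + s)) : ℝ) / 4 ^ (j + s) - (spr s m : ℝ) / 4 ^ s) =
      3 * ((spr (j + s) (BB β (j + s)) : ℝ) - (4 ^ j * spr s m)) / 4 ^ (j + s) := by
    rw [pow_add]; field_simp
  have e4 : ((2:ℝ) ^ (j + s)) ^ 2 = 4 ^ (j + s) := by rw [← pow_mul, mul_comm, pow_mul]; norm_num
  rw [e1, e2, div_pow, e4]
  gcongr

theorem KK_dyadic (m N : ℕ) : KK ((m : ℝ) / 2 ^ N) = (spr N m : ℝ) / 4 ^ N := by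
  refine tendsto_nhds_unique ((tendsto_add_atTop_iff_nat N).2 (T_tendsto _)) ?_
  refine tendsto_const_nhds.congr fun j => ?_
  have : BB ((m : ℝ) / 2 ^ N) (j + N) = m * 2 ^ j := by
    simp only [BB]
    have : (m : ℝ) / 2 ^ N * 2 ^ (j + N) = ((m * 2 ^ j : ℕ) : ℝ) := by
      push_cast; rw [pow_add]; field_simp
    rw [this, Nat.floor_natCast]
  rw [this, add_comm j N, spr_shift, pow_add]
  push_cast
  field_simp

theorem stmt11_dyadic (m N : ℕ) (γ : ℝ) (h : QSRed γ ((m : ℝ) / 2 ^ N)) :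
    QSRed γ (h₁ ((m : ℝ) / 2 ^ N)) := by
  have hpow : ∀ c k : ℕ, Computable (fun s : ℕ => c ^ (s + k)) := fun c k =>
    (prim_pow.comp (Primrec.const c) (Primrec.nat_add.comp Primrec.id (Primrec.const k))).to_comp
  set R := 4 ^ N + 3 * spr N m with hR
  have hR1 : 1 ≤ R := by have : 0 < 4 ^ N := by positivity
                         omega
  have hα : h₁ ((m : ℝ) / 2 ^ N) = (R : ℝ) / (3 * 4 ^ N) := by
    rw [h₁_eq, KK_dyadic, hR]; push_cast; field_simp
  have hp : Computable (fun s => (((m * 2 ^ (s + 0) : ℕ) : ℚ) - (1 : ℕ)) / (2 ^ (s + N) : ℕ)) :=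
    mk_comp (a := fun s => m * 2 ^ (s + 0)) (b := fun _ => 1) (d := fun s => 2 ^ (s + N))
      (Primrec.nat_mul.to_comp.comp (Computable.const m) (hpow 2 0)) (Computable.const 1) (hpow 2 N)
      (fun s => by positivity)
  have hge : ∀ s, 1 < R * 4 ^ (s + 1) := fun s => by
    have : 4 ^ 1 ≤ 4 ^ (s + 1) := Nat.pow_le_pow_right (by norm_num) (by omega)
    nlinarith
  have hdiff : ∀ s, h₁ ((m : ℝ) / 2 ^ N) - ((R * 4 ^ (s + 1) - 1 : ℕ) : ℝ) / (3 * 4 ^ (s + (N + 1)) : ℕ)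
      = 1 / (3 * 4 ^ (s + (N + 1))) := fun s => by
    rw [hα, Nat.cast_sub (hge s).le]
    push_cast
    rw [show s + (N + 1) = (s + 1) + N by ring, pow_add _ (s + 1) N]
    field_simp
    ring
  refine h.reduce hp (cn := fun s => R * 4 ^ (s + 1) - 1) (cd := fun s => 3 * 4 ^ (s + (N + 1)))
    (Primrec.nat_sub.to_comp.comp (Primrec.nat_mul.to_comp.comp (Computable.const R) (hpow 4 1))
      (Computable.const 1))
    (Primrec.nat_mul.to_comp.comp (Computable.const 3) (hpow 4 (N + 1)))
    (fun s => Nat.sub_pos_of_lt (hge s)) (fun s => by positivity) (fun s => ?_) 12 (by norm_num)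
    (fun s => ?_) (fun q hq => ?_)
  · push_cast
    rw [div_lt_div_iff₀ (by positivity) (by positivity), add_zero, pow_add]
    have : (0:ℝ) < 2 ^ N := by positivity
    nlinarith
  · simp only [hdiff]
    push_cast
    apply le_of_eq
    have : (m : ℝ) / 2 ^ N - (m * 2 ^ (s + 0) - 1) / 2 ^ (s + N) = 1 / 2 ^ (s + N) := by
      rw [add_zero, pow_add]; field_simp; ring
    rw [this, div_pow, ← pow_mul, mul_comm (s + N) 2, pow_mul, ← add_assoc, pow_succ _ (s + N)]
    norm_num
    field_simp
    norm_num
  · obtain ⟨s, hs⟩ := exists_pow_lt_of_lt_one (sub_pos.2 hq) (show (1/4 : ℝ) < 1 by norm_num)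
    refine ⟨s, ?_⟩
    have h1 := hdiff s
    have h2 : (1:ℝ) / (3 * 4 ^ (s + (N + 1))) ≤ (1/4) ^ s := by
      rw [div_pow, one_pow]
      apply one_div_le_one_div_of_le (by positivity)
      have : (4:ℝ) ^ s ≤ 4 ^ (s + (N + 1)) := pow_le_pow_right₀ (by norm_num) (by omega)
      have : (0:ℝ) < 4 ^ (s + (N + 1)) := by positivity
      linarith
    push_cast at h1 ⊢
    linarith

theorem stmt11_nondyadic (β : ℝ) (h0 : 0 ≤ β) (h1 : β < 1) (hβ : LeftCE β)
    (hnd : ∀ m N : ℕ, β ≠ (m : ℝ) / 2 ^ N) (γ : ℝ) (h : QSRed γ β) : QSRed γ (h₁ β) := by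
  obtain ⟨a, hac, ham, hat⟩ := hβ
  have hale : ∀ s, (a s : ℝ) ≤ β := fun s =>
    Monotone.ge_of_tendsto (f := fun n => (a n : ℝ)) (fun i j hij => Rat.cast_le.2 (ham hij)) hat s
  have hmul := Primrec.nat_mul.to_comp
  have hpow : ∀ c : ℕ, Computable (fun s : ℕ => c ^ s) := fun c =>
    (prim_pow.comp (Primrec.const c) Primrec.id).to_comp
  let M : ℕ → ℕ := fun s => ((a s).num.toNat * 2 ^ s) / (a s).den
  have hM : Computable M :=
    Primrec.nat_div.to_comp.comp (hmul.comp (pnum_comp.comp hac) (hpow 2)) (den_comp.comp hac)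
  have hq : ∀ s, (a s : ℝ) = ((a s).num : ℝ) / (a s).den := fun s => by
    exact_mod_cast (Rat.num_div_den (a s)).symm
  have hden : ∀ s, (0:ℝ) < (a s).den := fun s => by exact_mod_cast (a s).pos
  have hMle : ∀ s, (M s : ℝ) ≤ β * 2 ^ s := by
    intro s
    have e1 : (M s : ℝ) ≤ (((a s).num.toNat * 2 ^ s : ℕ) : ℝ) / (a s).den := Nat.cast_div_le
    refine e1.trans ?_
    push_cast
    rw [mul_div_right_comm]
    gcongr
    rcases le_total 0 (a s).num with hn | hn
    · have : ((a s).num : ℝ) = (((a s).num.toNat : ℕ) : ℝ) := by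
        exact_mod_cast (Int.toNat_of_nonneg hn).symm
      rw [← this, ← hq]
      exact hale s
    · rw [Int.toNat_of_nonpos hn]; simpa using h0
  have hMlt : ∀ s, (M s : ℝ) / 2 ^ s < β := fun s => by
    refine lt_of_le_of_ne ?_ (hnd _ _).symm
    rw [div_le_iff₀ (by positivity)]; exact hMle s
  have hM2 : ∀ s, M s < 2 ^ s := fun s => by
    have h3 := hMle s
    have : (0:ℝ) < 2 ^ s := by positivity
    have : ((M s : ℕ) : ℝ) < ((2 ^ s : ℕ) : ℝ) := by push_cast; nlinarith
    exact_mod_cast this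
  have hp : Computable (fun s => (((M s : ℕ) : ℚ) - (0 : ℕ)) / (2 ^ s : ℕ)) :=
    mk_comp (a := M) (b := fun _ => 0) (d := fun s => 2 ^ s) hM (Computable.const 0) (hpow 2)
      (fun s => by positivity)
  have hc : ∀ s, ((4 ^ s + 3 * spr s (M s) : ℕ) : ℝ) / (3 * 4 ^ s : ℕ) =
      1 / 3 + (spr s (M s) : ℝ) / 4 ^ s := fun s => by
    push_cast; field_simp
  refine h.reduce hp (cn := fun s => 4 ^ s + 3 * spr s (M s)) (cd := fun s => 3 * 4 ^ s)
    (Primrec.nat_add.to_comp.comp (hpow 4) (hmul.comp (Computable.const 3)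
      (spr_prim.to_comp.comp Computable.id hM)))
    (hmul.comp (Computable.const 3) (hpow 4))
    (fun s => by positivity) (fun s => by positivity) (fun s => ?_) 3 (by norm_num)
    (fun s => ?_) (fun q hq' => ?_)
  · push_cast; rw [sub_zero]; exact hMlt s
  · simp only [hc, h₁_eq]
    push_cast
    rw [sub_zero]
    have := main_ineq h0 h1 s (M s) (hMle s)
    linarith
  · simp only [hc]
    rw [h₁_eq] at hq'
    have hq2 : (q : ℝ) - 1 / 3 < KK β := by linarith
    obtain ⟨n, hn⟩ := ((T_tendsto β).eventually (lt_mem_nhds hq2)).exists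
    have hBn : (BB β n : ℝ) / 2 ^ n < β := lt_of_le_of_ne (BB_le h0 n) (hnd _ _).symm
    obtain ⟨s, hs, hns⟩ := ((hat.eventually (lt_mem_nhds hBn)).and (eventually_ge_atTop n)).exists
    refine ⟨s, ?_⟩
    obtain ⟨j, rfl⟩ := Nat.exists_eq_add_of_le hns
    have hle : BB β n * 2 ^ j ≤ M (n + j) := by
      rw [Nat.le_div_iff_mul_le (a (n + j)).pos]
      rw [hq, div_lt_div_iff₀ (by positivity) (hden _)] at hs
      have h5 : ((a (n+j)).num : ℝ) ≤ (((a (n+j)).num.toNat : ℕ) : ℝ) := by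
        exact_mod_cast Int.self_le_toNat _
      have h6 : (BB β n : ℝ) * (a (n + j)).den ≤ (((a (n+j)).num.toNat : ℕ) : ℝ) * 2 ^ n := by
        refine hs.le.trans ?_
        gcongr
      have h7 : BB β n * (a (n + j)).den ≤ (a (n+j)).num.toNat * 2 ^ n := by exact_mod_cast h6
      calc BB β n * 2 ^ j * (a (n + j)).den = (BB β n * (a (n + j)).den) * 2 ^ j := by ring
        _ ≤ ((a (n+j)).num.toNat * 2 ^ n) * 2 ^ j := by gcongr
        _ = _ := by ring
    have key := spr_ineq (n + j) _ _ hle (hM2 _)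
    rw [spr_shift] at key
    have hle' : ((BB β n * 2 ^ j : ℕ) : ℤ) ≤ M (n + j) := by exact_mod_cast hle
    have key2 : ((4 ^ j * spr n (BB β n) : ℕ) : ℤ) ≤ spr (n + j) (M (n + j)) := by nlinarith
    have key3 : (4 ^ j * spr n (BB β n) : ℝ) ≤ spr (n + j) (M (n + j)) := by exact_mod_cast key2
    have e : (spr n (BB β n) : ℝ) / 4 ^ n = (4 ^ j * spr n (BB β n) : ℝ) / 4 ^ (n + j) := by
      rw [pow_add]; field_simp
    have : (spr n (BB β n) : ℝ) / 4 ^ n ≤ (spr (n + j) (M (n + j)) : ℝ) / 4 ^ (n + j) := by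
      rw [e]; gcongr
    linarith

/-- If `β ∈ [0,1)` is a left-c.e. real that is qS-complete among left-c.e. reals,
then `h₁ β` is also qS-complete among left-c.e. reals. -/
theorem stmt11 (β : ℝ) (h0 : 0 ≤ β) (h1 : β < 1) (hβ : LeftCE β)
    (hcomp : ∀ γ : ℝ, LeftCE γ → QSRed γ β) :
    ∀ γ : ℝ, LeftCE γ → QSRed γ (h₁ β) := by
  intro γ hγ
  by_cases hd : ∃ m N : ℕ, β = (m : ℝ) / 2 ^ N
  · obtain ⟨m, N, rfl⟩ := hd
    exact stmt11_dyadic m N γ (hcomp γ hγ)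
  · push Not at hd
    exact stmt11_nondyadic β h0 h1 hβ hd γ (hcomp γ hγ)
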